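/- arXiv:2102.03871 — 2 statements merged into one kernel-verified Lean document; each statement's English description precedes it below -/
import Mathlib

section
/- Let M be a quasianalytic derivation closed weight sequence such that m_k := M_k/k! is log-convex. Then the ring of germs at 0 ∈ ℝ of complex-valued E^{M}-functions has property (D): for every function f defined on an open neighborhood of 0 in ℝ and every integer j ≥ 1, if f^j and f^{j+1} are of class E^{M} on some open neighborhood of 0, then f is of class E^{M} on some open neighborhood of 0. -/
open Filter Set Asymptotics MeasureTheory

noncomputable section

/-- `M` is a weight sequence: `M 0 = 1`, positive, `M 1 ≥ 1`, log-convex and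
`M k ^ (1/k) → ∞`. -/
def IsWeightSeq (M : ℕ → ℝ) : Prop :=
  M 0 = 1 ∧ (∀ k, 0 < M k) ∧ 1 ≤ M 1 ∧
    (∀ k : ℕ, 1 ≤ k → M k ^ 2 ≤ M (k - 1) * M (k + 1)) ∧
    Tendsto (fun k : ℕ => M k ^ (1 / (k : ℝ))) atTop atTop

/-- The sequence `m k = M k / k!`. -/
def mseq (M : ℕ → ℝ) : ℕ → ℝ := fun k => M k / (Nat.factorial k : ℝ)

/-- Log-convexity of a sequence. -/
def LogConvexSeq (m : ℕ → ℝ) : Prop := ∀ k : ℕ, 1 ≤ k → m k ^ 2 ≤ m (k - 1) * m (k + 1)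

/-- `m k ^ (1/k) → ∞`. -/
def RootTendsToInfty (m : ℕ → ℝ) : Prop :=
  Tendsto (fun k : ℕ => m k ^ (1 / (k : ℝ))) atTop atTop

/-- Moderate growth of a sequence. -/
def ModerateGrowth (M : ℕ → ℝ) : Prop :=
  ∃ C : ℝ, 0 < C ∧ ∀ j k : ℕ, M (j + k) ≤ C ^ (j + k) * M j * M k

/-- Derivation closedness of a sequence. -/
def DerivClosed (M : ℕ → ℝ) : Prop :=
  ∃ C : ℝ, 0 < C ∧ ∀ k : ℕ, M (k + 1) ≤ C ^ (k + 1) * M k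

/-- Non-quasianalyticity: `∑_{k≥1} M (k-1) / M k = ∑_{k≥1} 1/μ_k < ∞`. -/
def NonQuasianalytic (M : ℕ → ℝ) : Prop := Summable fun k : ℕ => M k / M (k + 1)

/-- Quasianalyticity: `∑_{k≥1} 1/μ_k = ∞`. -/
def Quasianalytic (M : ℕ → ℝ) : Prop := ¬ NonQuasianalytic M

/-- The associated function `h_m (t) = inf_k m k * t ^ k`. -/
def hFun (m : ℕ → ℝ) (t : ℝ) : ℝ := ⨅ k : ℕ, m k * t ^ k

/-- `Γ̄_m (t) = min {k | h_m t = m k * t ^ k}`. -/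
def GammaBar (m : ℕ → ℝ) (t : ℝ) : ℕ := sInf {k : ℕ | hFun m t = m k * t ^ k}

/-- `Γ̲_m (t) = min {k | m (k+1) / m k ≥ 1 / t}`. -/
def GammaLow (m : ℕ → ℝ) (t : ℝ) : ℕ := sInf {k : ℕ | 1 / t ≤ m (k + 1) / m k}

/-- The set whose supremum is `mg (M, N)`. -/
def mgSet (M N : ℕ → ℝ) : Set ℝ :=
  {x | ∃ j k : ℕ, 1 ≤ j + k ∧ x = (M (j + k) / (N j * N k)) ^ (1 / (j + k : ℝ))}

/-- `mg (M, N) = sup_{j+k ≥ 1} (M (j+k) / (N j * N k)) ^ (1/(j+k))`. -/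
def mg (M N : ℕ → ℝ) : ℝ := sSup (mgSet M N)

/-- `mg (M, N) < ∞`. -/
def MgFinite (M N : ℕ → ℝ) : Prop := BddAbove (mgSet M N)

/-- A weight sequence is regular: `m k ^ (1/k) → ∞`, derivation closed, and
`Γ̄_m (C t) ≤ Γ̲_m t` for some `C ≥ 1`. -/
def RegularWS (M : ℕ → ℝ) : Prop :=
  RootTendsToInfty (mseq M) ∧ DerivClosed M ∧
    ∃ C : ℝ, 1 ≤ C ∧ ∀ t : ℝ, 0 < t → GammaBar (mseq M) (C * t) ≤ GammaLow (mseq M) t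

/-- `f` is of class `E^{M}` (Roumieu) on the open set `U`. -/
def RoumieuOn {E : Type*} [NormedAddCommGroup E] [NormedSpace ℝ E]
    (M : ℕ → ℝ) (f : E → ℂ) (U : Set E) : Prop :=
  ContDiffOn ℝ (⊤ : ℕ∞) f U ∧
    ∀ V : Set E, IsOpen V → IsCompact (closure V) → closure V ⊆ U →
      ∃ C σ : ℝ, 0 < C ∧ 0 < σ ∧
        ∀ x ∈ V, ∀ k : ℕ, ‖iteratedFDerivWithin ℝ k f U x‖ ≤ C * σ ^ k * M k

/-- `f` is of class `E^{(M)}` (Beurling) on the open set `U`. -/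
def BeurlingOn {E : Type*} [NormedAddCommGroup E] [NormedSpace ℝ E]
    (M : ℕ → ℝ) (f : E → ℂ) (U : Set E) : Prop :=
  ContDiffOn ℝ (⊤ : ℕ∞) f U ∧
    ∀ V : Set E, IsOpen V → IsCompact (closure V) → closure V ⊆ U →
      ∀ σ : ℝ, 0 < σ → ∃ C : ℝ, 0 < C ∧
        ∀ x ∈ V, ∀ k : ℕ, ‖iteratedFDerivWithin ℝ k f U x‖ ≤ C * σ ^ k * M k

/-- A weight matrix: a nonempty, pointwise totally ordered family of weight sequences. -/
def IsWeightMatrix (W : Set (ℕ → ℝ)) : Prop :=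
  W.Nonempty ∧ (∀ M ∈ W, IsWeightSeq M) ∧
    ∀ M ∈ W, ∀ N ∈ W, (∀ k, M k ≤ N k) ∨ (∀ k, N k ≤ M k)

/-- R-regularity of a weight matrix. -/
def RRegular (W : Set (ℕ → ℝ)) : Prop :=
  (∀ M ∈ W, RootTendsToInfty (mseq M)) ∧
    (∀ M ∈ W, ∃ N ∈ W, ∃ C : ℝ, 1 ≤ C ∧ ∀ j : ℕ, M (j + 1) ≤ C ^ (j + 1) * N j) ∧
    (∀ M ∈ W, ∃ N ∈ W, ∃ C : ℝ, 1 ≤ C ∧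
      ∀ t : ℝ, 0 < t → GammaBar (mseq N) (C * t) ≤ GammaLow (mseq M) t)

/-- B-regularity of a weight matrix. -/
def BRegular (W : Set (ℕ → ℝ)) : Prop :=
  (∀ M ∈ W, RootTendsToInfty (mseq M)) ∧
    (∀ M ∈ W, ∃ N ∈ W, ∃ C : ℝ, 1 ≤ C ∧ ∀ j : ℕ, N (j + 1) ≤ C ^ j * M j) ∧
    (∀ M ∈ W, ∃ N ∈ W, ∃ C : ℝ, 1 ≤ C ∧
      ∀ t : ℝ, 0 < t → GammaBar (mseq M) (C * t) ≤ GammaLow (mseq N) t)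

/-- R-moderate growth of a weight matrix. -/
def RModerateGrowth (W : Set (ℕ → ℝ)) : Prop := ∀ M ∈ W, ∃ N ∈ W, MgFinite M N

/-- B-moderate growth of a weight matrix. -/
def BModerateGrowth (W : Set (ℕ → ℝ)) : Prop := ∀ M ∈ W, ∃ N ∈ W, MgFinite N M

/-- `f` is of class `E^{W}` (Roumieu, weight matrix) on the open set `U`. -/
def MatrixRoumieuOn {E : Type*} [NormedAddCommGroup E] [NormedSpace ℝ E]
    (W : Set (ℕ → ℝ)) (f : E → ℂ) (U : Set E) : Prop :=
  ContDiffOn ℝ (⊤ : ℕ∞) f U ∧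
    ∀ V : Set E, IsOpen V → IsCompact (closure V) → closure V ⊆ U →
      ∃ M ∈ W, ∃ C σ : ℝ, 0 < C ∧ 0 < σ ∧
        ∀ x ∈ V, ∀ k : ℕ, ‖iteratedFDerivWithin ℝ k f U x‖ ≤ C * σ ^ k * M k

/-- `f` is of class `E^{(W)}` (Beurling, weight matrix) on the open set `U`. -/
def MatrixBeurlingOn {E : Type*} [NormedAddCommGroup E] [NormedSpace ℝ E]
    (W : Set (ℕ → ℝ)) (f : E → ℂ) (U : Set E) : Prop :=
  ContDiffOn ℝ (⊤ : ℕ∞) f U ∧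
    ∀ V : Set E, IsOpen V → IsCompact (closure V) → closure V ⊆ U →
      ∀ M ∈ W, ∀ σ : ℝ, 0 < σ → ∃ C : ℝ, 0 < C ∧
        ∀ x ∈ V, ∀ k : ℕ, ‖iteratedFDerivWithin ℝ k f U x‖ ≤ C * σ ^ k * M k

/-- `ω` is a weight function. -/
def IsWeightFunction (ω : ℝ → ℝ) : Prop :=
  ContinuousOn ω (Ici 0) ∧ MonotoneOn ω (Ici 0) ∧ (∀ t ∈ Ici (0 : ℝ), 0 ≤ ω t) ∧
    ((fun t => ω (2 * t)) =O[atTop] ω) ∧ (ω =o[atTop] fun t : ℝ => t) ∧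
    ((fun t => Real.log t) =o[atTop] ω) ∧ ConvexOn ℝ (Ici 0) fun t => ω (Real.exp t)

/-- The Young conjugate `φ*_ω (s) = sup_{t ≥ 0} (s t - ω (e^t))`. -/
def phiStar (ω : ℝ → ℝ) (s : ℝ) : ℝ := sSup ((fun t => s * t - ω (Real.exp t)) '' Ici 0)

/-- Non-quasianalyticity of a weight function. -/
def NonQuasianalyticW (ω : ℝ → ℝ) : Prop := IntegrableOn (fun t => ω t / t ^ 2) (Ici 1)

/-- `f` is of class `E^{ω}` (Roumieu) on the open set `U`. -/
def OmegaRoumieuOn {E : Type*} [NormedAddCommGroup E] [NormedSpace ℝ E]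
    (ω : ℝ → ℝ) (f : E → ℂ) (U : Set E) : Prop :=
  ContDiffOn ℝ (⊤ : ℕ∞) f U ∧
    ∀ V : Set E, IsOpen V → IsCompact (closure V) → closure V ⊆ U →
      ∃ C ρ : ℝ, 0 < C ∧ 0 < ρ ∧
        ∀ x ∈ V, ∀ k : ℕ,
          ‖iteratedFDerivWithin ℝ k f U x‖ ≤ C * Real.exp (phiStar ω (ρ * k) / ρ)

/-- `f` is of class `E^{(ω)}` (Beurling) on the open set `U`. -/
def OmegaBeurlingOn {E : Type*} [NormedAddCommGroup E] [NormedSpace ℝ E]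
    (ω : ℝ → ℝ) (f : E → ℂ) (U : Set E) : Prop :=
  ContDiffOn ℝ (⊤ : ℕ∞) f U ∧
    ∀ V : Set E, IsOpen V → IsCompact (closure V) → closure V ⊆ U →
      ∀ ρ : ℝ, 0 < ρ → ∃ C : ℝ, 0 < C ∧
        ∀ x ∈ V, ∀ k : ℕ,
          ‖iteratedFDerivWithin ℝ k f U x‖ ≤ C * Real.exp (phiStar ω (ρ * k) / ρ)

/-- The open ellipse `Ω_ε` with vertices `± cosh ε` and co-vertices `± i sinh ε`. -/
def OmegaE (ε : ℝ) : Set ℂ :=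
  {z : ℂ | (z.re / Real.cosh ε) ^ 2 + (z.im / Real.sinh ε) ^ 2 < 1}

/-- The sequence space `Λ^{M}`. -/
def Lambda (M : ℕ → ℝ) : Set (ℕ → ℂ) :=
  {c | ∃ ρ : ℝ, 0 < ρ ∧ ∃ C : ℝ, ∀ k, ‖c k‖ ≤ C * ρ ^ k * M k}

/-- `L(M)`: all non-quasianalytic weight sequences `N ≥ M` with `n = N/k!` log-convex. -/
def LM (M : ℕ → ℝ) : Set (ℕ → ℝ) :=
  {N | IsWeightSeq N ∧ NonQuasianalytic N ∧ (∀ k, M k ≤ N k) ∧ LogConvexSeq (mseq N)}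

/-- A quasianalytic weight sequence `M` is intersectable if `Λ^{M} = ⋂_{N ∈ L(M)} Λ^{N}`. -/
def Intersectable (M : ℕ → ℝ) : Prop := Lambda M = ⋂ N ∈ LM M, Lambda N

/-!
Near `a` the ring of germs of class `E^{M}` behaves like a discrete valuation ring with uniformizer
`x - a`: a nonzero germ is not flat (Denjoy-Carleman, by Bang's argument), so dividing by `x - a`
finitely many times (Hadamard division, where derivation closedness is needed) writes it as
`(x - a) ^ p * u` with `u a ≠ 0`, and such a `u` is invertible because log-convexity of `M k / k!`
absorbs the binomial coefficients of Leibniz' rule. Write `f ^ j = (x - a) ^ n * u` and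
`f ^ (j + 1) = (x - a) ^ p * v`. Comparing orders in `(f ^ j) ^ (j + 1) = (f ^ (j + 1)) ^ j` gives
`n * (j + 1) = p * j`, so `n ≤ p` and `f ^ j` divides `f ^ (j + 1)`; the quotient is `f`.
-/

open scoped Topology ContDiff

section Sequences

namespace LogConvexSeq

variable {m : ℕ → ℝ}

lemma monotone_ratio (hm : LogConvexSeq m) (hpos : ∀ k, 0 < m k) :
    Monotone fun k => m (k + 1) / m k :=
  monotone_nat_of_le_succ fun k => by
    rw [div_le_div_iff₀ (hpos k) (hpos (k + 1)), ← sq, mul_comm]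
    exact hm (k + 1) k.succ_pos

lemma mul_le (hm : LogConvexSeq m) (hpos : ∀ k, 0 < m k) (k l : ℕ) :
    m k * m l ≤ m 0 * m (k + l) := by
  induction l with
  | zero => exact (mul_comm _ _).le
  | succ l ih =>
    have hratio : m (l + 1) / m l ≤ m (k + l + 1) / m (k + l) :=
      hm.monotone_ratio hpos (Nat.le_add_left l k)
    calc m k * m (l + 1) = m k * m l * (m (l + 1) / m l) := by
          rw [mul_assoc, mul_div_cancel₀ _ (hpos l).ne']
      _ ≤ m 0 * m (k + l) * (m (k + l + 1) / m (k + l)) :=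
          mul_le_mul ih hratio (div_pos (hpos _) (hpos _)).le (mul_pos (hpos _) (hpos _)).le
      _ = m 0 * m (k + l + 1) := by
          rw [mul_assoc, mul_div_cancel₀ _ (hpos _).ne']

lemma const_mul_pow_mul (hm : LogConvexSeq m) (C σ : ℝ) :
    LogConvexSeq fun k => C * σ ^ k * m k := by
  intro k hk
  obtain ⟨l, rfl⟩ := Nat.exists_eq_add_of_le' hk
  calc (C * σ ^ (l + 1) * m (l + 1)) ^ 2 = (C * σ ^ (l + 1)) ^ 2 * m (l + 1) ^ 2 := by ring
    _ ≤ (C * σ ^ (l + 1)) ^ 2 * (m l * m (l + 1 + 1)) := by gcongr; exact hm (l + 1) hk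
    _ = C * σ ^ l * m l * (C * σ ^ (l + 1 + 1) * m (l + 1 + 1)) := by ring

variable {M : ℕ → ℝ}

lemma choose_mul_mul_le (hM : LogConvexSeq (mseq M)) (hpos : ∀ k, 0 < M k) (k l : ℕ) :
    ((k + l).choose k : ℝ) * (M k * M l) ≤ M 0 * M (k + l) := by
  have hmul := hM.mul_le (fun k => div_pos (hpos k) (by positivity)) k l
  simp only [mseq, Nat.factorial_zero, Nat.cast_one, div_one] at hmul
  rw [Nat.cast_add_choose]
  calc _ = ((k + l).factorial : ℝ) * (M k / k.factorial * (M l / l.factorial)) := by ring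
    _ ≤ ((k + l).factorial : ℝ) * (M 0 * (M (k + l) / (k + l).factorial)) := by gcongr
    _ = M 0 * M (k + l) := by field_simp

lemma of_mseq (hM : LogConvexSeq (mseq M)) : LogConvexSeq M := by
  intro k hk
  obtain ⟨l, rfl⟩ := Nat.exists_eq_add_of_le' hk
  have hfactor (i : ℕ) : M i = i.factorial * mseq M i := by
    rw [mseq, mul_div_cancel₀ _ (Nat.cast_ne_zero.2 i.factorial_ne_zero)]
  have hfactorial : (l + 1).factorial ^ 2 ≤ l.factorial * (l + 2).factorial := by
    calc (l + 1).factorial ^ 2 = l.factorial * ((l + 1) * (l + 1).factorial) := by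
          rw [Nat.factorial_succ]; ring
      _ ≤ l.factorial * ((l + 2) * (l + 1).factorial) := by gcongr; exact Nat.le_succ _
  calc M (l + 1) ^ 2 = ((l + 1).factorial : ℝ) ^ 2 * mseq M (l + 1) ^ 2 := by
        rw [hfactor, mul_pow]
    _ ≤ (l.factorial * (l + 2).factorial : ℝ) * (mseq M l * mseq M (l + 2)) :=
        mul_le_mul (by exact_mod_cast hfactorial) (hM (l + 1) hk) (sq_nonneg _) (by positivity)
    _ = M l * M (l + 2) := by rw [hfactor l, hfactor (l + 2), mul_mul_mul_comm]

end LogConvexSeq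

lemma Quasianalytic.const_mul_pow_mul {M : ℕ → ℝ} (hM : Quasianalytic M) {C σ : ℝ}
    (hC : C ≠ 0) (hσ : σ ≠ 0) : Quasianalytic fun k => C * σ ^ k * M k := by
  intro hsum
  refine hM ((hsum.mul_left σ).congr fun k => ?_)
  beta_reduce
  rw [pow_succ, mul_div_mul_comm]
  field_simp

end Sequences

section DenjoyCarleman

variable {E : Type*} [NormedAddCommGroup E] [NormedSpace ℝ E]

lemma hasDerivAt_iteratedDeriv {f : ℝ → E} {x : ℝ} (hf : ContDiffAt ℝ ∞ f x) (n : ℕ) :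
    HasDerivAt (iteratedDeriv n f) (iteratedDeriv (n + 1) f x) x := by
  rw [iteratedDeriv_succ, hasDerivAt_deriv_iff, ← iteratedDerivWithin_univ,
    ← differentiableWithinAt_univ]
  exact (contDiffWithinAt_univ.2 hf).differentiableWithinAt_iteratedDerivWithin
    (WithTop.coe_lt_coe.2 (ENat.natCast_lt_top n))
      (by simp only [insert_eq_of_mem, mem_univ, uniqueDiffOn_univ])

lemma norm_le_mul_exp_of_norm_deriv_le {g g' : ℝ → E} {a b c L : ℝ}
    (hg : ∀ y ∈ Icc a b, HasDerivAt g (g' y) y) (ha : ‖g a‖ ≤ c)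
    (hg' : ∀ y ∈ Icc a b, ‖g' y‖ ≤ c * L * Real.exp (L * (y - a))) :
    ∀ y ∈ Icc a b, ‖g y‖ ≤ c * Real.exp (L * (y - a)) := by
  have hmajorant (y : ℝ) : HasDerivAt (fun y => c * Real.exp (L * (y - a)))
      (c * L * Real.exp (L * (y - a))) y :=
    ((((hasDerivAt_id' y).sub_const a).const_mul L).exp.const_mul c).congr_deriv (by ring)
  exact fun y hy => image_norm_le_of_norm_deriv_right_le_deriv_boundary
    (fun z hz => (hg z hz).continuousAt.continuousWithinAt)
    (fun z hz => (hg z (Ico_subset_Icc_self hz)).hasDerivWithinAt)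
    (by simpa only [sub_self, mul_zero, Real.exp_zero, mul_one] using ha) hmajorant
    (fun z hz => hg' z (Ico_subset_Icc_self hz)) hy

variable {N : ℕ → ℝ} {f : ℝ → E} {a b : ℝ}

lemma norm_iteratedDeriv_le_mul_exp (hN : LogConvexSeq N) (hpos : ∀ k, 0 < N k)
    (hf : ∀ y ∈ Icc a b, ContDiffAt ℝ ∞ f y) {k : ℕ}
    (hbound : ∀ y ∈ Icc a b, ‖iteratedDeriv (k + 1) f y‖ ≤ N (k + 1))
    (ha : ∀ n, ‖iteratedDeriv n f a‖ ≤ Real.exp (n - (k + 1)) * N n) {n : ℕ} (hn : n ≤ k + 1) :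
    ∀ y ∈ Icc a b, ‖iteratedDeriv n f y‖ ≤ Real.exp (n - (k + 1)) * N n *
      Real.exp (Real.exp 1 * (N (k + 1) / N k) * (y - a)) := by
  induction hn using Nat.decreasingInduction with
  | self =>
    intro y hy
    have hL : 0 < Real.exp 1 * (N (k + 1) / N k) :=
      mul_pos (Real.exp_pos 1) (div_pos (hpos _) (hpos _))
    push_cast
    rw [sub_self, Real.exp_zero, one_mul]
    exact (hbound y hy).trans (le_mul_of_one_le_right (hpos _).le
      (Real.one_le_exp (mul_nonneg hL.le (sub_nonneg.2 hy.1))))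
  | of_succ n hn ih =>
    refine norm_le_mul_exp_of_norm_deriv_le (fun y hy => hasDerivAt_iteratedDeriv (hf y hy) n)
      (ha n) fun y hy => (ih y hy).trans (mul_le_mul_of_nonneg_right ?_ (Real.exp_pos _).le)
    have hratio : N (n + 1) ≤ N (k + 1) / N k * N n :=
      (div_le_iff₀ (hpos n)).1 (hN.monotone_ratio hpos (Nat.lt_succ_iff.1 hn))
    calc Real.exp ((n + 1 : ℕ) - (k + 1)) * N (n + 1)
        = Real.exp (n - (k + 1)) * Real.exp 1 * N (n + 1) := by
          rw [← Real.exp_add]; push_cast; ring_nf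
      _ ≤ Real.exp (n - (k + 1)) * Real.exp 1 * (N (k + 1) / N k * N n) := by gcongr
      _ = Real.exp (n - (k + 1)) * N n * (Real.exp 1 * (N (k + 1) / N k)) := by ring

lemma norm_iteratedDeriv_le_of_sub_le (hN : LogConvexSeq N) (hpos : ∀ k, 0 < N k)
    (hf : ∀ y ∈ Icc a b, ContDiffAt ℝ ∞ f y)
    (hbound : ∀ y ∈ Icc a b, ∀ n, ‖iteratedDeriv n f y‖ ≤ N n) {k : ℕ}
    (ha : ∀ n, ‖iteratedDeriv n f a‖ ≤ Real.exp (n - (k + 1)) * N n) {y : ℝ} (hy : y ∈ Icc a b)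
    (hya : Real.exp 1 * (y - a) ≤ N k / N (k + 1)) (n : ℕ) :
    ‖iteratedDeriv n f y‖ ≤ Real.exp (n - k) * N n := by
  rcases le_total n (k + 1) with hn | hn
  · have hexp : Real.exp 1 * (N (k + 1) / N k) * (y - a) ≤ 1 := by
      rwa [mul_right_comm, ← le_div_iff₀ (div_pos (hpos _) (hpos _)), one_div_div]
    calc _ ≤ Real.exp (n - (k + 1)) * N n *
          Real.exp (Real.exp 1 * (N (k + 1) / N k) * (y - a)) :=
          norm_iteratedDeriv_le_mul_exp hN hpos hf (fun z hz => hbound z hz _) ha hn y hy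
      _ ≤ Real.exp (n - (k + 1)) * N n * Real.exp 1 := by
        have := hpos n
        gcongr
      _ = Real.exp (n - k) * N n := by
        rw [mul_right_comm, ← Real.exp_add]; ring_nf
  · have hkn : (k : ℝ) ≤ n := by exact_mod_cast (Nat.le_succ k).trans hn
    exact (hbound y hy n).trans
      (le_mul_of_one_le_left (hpos n).le (Real.one_le_exp (sub_nonneg.2 hkn)))

-- With `μ i = N i / N (i - 1)`, a step to the right of length `1 / (e * μ i)` costs one factor `e`,
-- so from the flat point `a` one can move a distance `∑ 1 / (e * μ i)` over `k < i ≤ k + d` and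
-- still gain the factor `exp (-k)`.
lemma norm_iteratedDeriv_le_of_flat (hN : LogConvexSeq N) (hpos : ∀ k, 0 < N k)
    (hf : ∀ y ∈ Icc a b, ContDiffAt ℝ ∞ f y)
    (hbound : ∀ y ∈ Icc a b, ∀ n, ‖iteratedDeriv n f y‖ ≤ N n)
    (hflat : ∀ n, iteratedDeriv n f a = 0) (d k : ℕ) {y : ℝ} (hy : y ∈ Icc a b)
    (hya : Real.exp 1 * (y - a) ≤ ∑ i ∈ Finset.range d, N (k + i) / N (k + i + 1)) (n : ℕ) :
    ‖iteratedDeriv n f y‖ ≤ Real.exp (n - k) * N n := by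
  induction d generalizing k y n with
  | zero =>
    have hya' : y - a ≤ 0 := by
      rw [Finset.sum_range_zero] at hya
      exact nonpos_of_mul_nonpos_right hya (Real.exp_pos 1)
    rw [le_antisymm (sub_nonpos.1 hya') hy.1, hflat, norm_zero]
    exact mul_nonneg (Real.exp_pos _).le (hpos n).le
  | succ d ih =>
    set q := N k / N (k + 1) / Real.exp 1
    have hq : 0 < q := div_pos (div_pos (hpos _) (hpos _)) (Real.exp_pos 1)
    set x := max a (y - q)
    have hxy : x ≤ y := max_le hy.1 (sub_le_self _ hq.le)
    have hx : x ∈ Icc a b := ⟨le_max_left _ _, hxy.trans hy.2⟩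
    have hsub : Icc x b ⊆ Icc a b := Icc_subset_Icc_left hx.1
    refine norm_iteratedDeriv_le_of_sub_le hN hpos (fun z hz => hf z (hsub hz))
      (fun z hz => hbound z (hsub hz)) (fun m => ?_) ⟨hxy, hy.2⟩ ?_ n
    · rw [← Nat.cast_add_one]
      refine ih (k + 1) hx ?_ m
      have hqe : Real.exp 1 * q = N k / N (k + 1) := mul_div_cancel₀ _ (Real.exp_ne_zero 1)
      simp only [Finset.sum_range_succ', add_zero, ← add_assoc, add_right_comm k _ 1] at hya ⊢
      rcases le_total (y - q) a with h | h
      · rw [show x = a from max_eq_left h, sub_self, mul_zero]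
        exact Finset.sum_nonneg fun i _ => (div_pos (hpos _) (hpos _)).le
      · rw [show x = y - q from max_eq_right h]
        linarith
    · have : y - x ≤ q := sub_le_comm.1 (le_max_right _ _)
      rwa [mul_comm, ← le_div_iff₀ (Real.exp_pos 1)]

lemma eq_zero_of_flat_of_quasianalytic (hN : LogConvexSeq N) (hpos : ∀ k, 0 < N k)
    (hq : Quasianalytic N) (hf : ∀ y ∈ Icc a b, ContDiffAt ℝ ∞ f y)
    (hbound : ∀ y ∈ Icc a b, ∀ n, ‖iteratedDeriv n f y‖ ≤ N n)
    (hflat : ∀ n, iteratedDeriv n f a = 0) {y : ℝ} (hy : y ∈ Icc a b) : f y = 0 := by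
  have hsmall (k : ℕ) : ‖f y‖ ≤ Real.exp (-k) * N 0 := by
    have htail : ¬ Summable fun i => N (k + i) / N (k + i + 1) := fun h =>
      hq ((summable_nat_add_iff k).1 (by simpa only [add_comm k] using h))
    rw [not_summable_iff_tendsto_nat_atTop_of_nonneg
      fun i => (div_pos (hpos _) (hpos _)).le] at htail
    obtain ⟨d, hd⟩ := (htail.eventually_ge_atTop (Real.exp 1 * (y - a))).exists
    simpa using norm_iteratedDeriv_le_of_flat hN hpos hf hbound hflat d k hy hd 0
  have hlim : Tendsto (fun k : ℕ => Real.exp (-k) * N 0) atTop (𝓝 (0 * N 0)) :=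
    (Real.tendsto_exp_neg_atTop_nhds_zero.comp tendsto_natCast_atTop_atTop).mul_const _
  exact norm_le_zero_iff.1 (by simpa using ge_of_tendsto' hlim hsmall)

end DenjoyCarleman

section LeibnizEstimates

variable {M : ℕ → ℝ} {C D σ : ℝ}

lemma sum_choose_mul_mul_le (hM : LogConvexSeq M) (hpos : ∀ k, 0 < M k) {τ : ℝ} (hC : 0 ≤ C)
    (hD : 0 ≤ D) (hσ : 0 ≤ σ) (hτ : 0 ≤ τ) (n : ℕ) :
    ∑ i ∈ Finset.range (n + 1), (n.choose i : ℝ) * (C * σ ^ i * M i) *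
      (D * τ ^ (n - i) * M (n - i)) ≤ C * D * M 0 * (σ + τ) ^ n * M n := by
  rw [add_pow, Finset.mul_sum, Finset.sum_mul]
  refine Finset.sum_le_sum fun i hi => ?_
  have hmul := hM.mul_le hpos i (n - i)
  rw [Nat.add_sub_cancel' (Finset.mem_range_succ_iff.1 hi)] at hmul
  calc _ = C * D * (σ ^ i * τ ^ (n - i) * n.choose i) * (M i * M (n - i)) := by ring
    _ ≤ C * D * (σ ^ i * τ ^ (n - i) * n.choose i) * (M 0 * M n) := by gcongr
    _ = _ := by ring

lemma sub_mul_sum_pow_mul_pow_le {ρ : ℝ} (hσ : 0 ≤ σ) (n : ℕ) :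
    (ρ - σ) * ∑ k ∈ Finset.range (n + 1), σ ^ (k + 1) * ρ ^ (n - k) ≤ σ * ρ ^ (n + 1) := by
  have hfactor : ∑ k ∈ Finset.range (n + 1), σ ^ (k + 1) * ρ ^ (n - k) =
      σ * ∑ k ∈ Finset.range (n + 1), σ ^ k * ρ ^ (n + 1 - 1 - k) := by
    rw [Finset.mul_sum]
    exact Finset.sum_congr rfl fun k _ => by rw [pow_succ', mul_assoc, Nat.add_sub_cancel]
  have hpow := mul_nonneg hσ (pow_nonneg hσ (n + 1))
  rw [hfactor]
  linear_combination hpow - σ * geom_sum₂_mul σ ρ (n + 1)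

lemma le_mul_pow_mul_of_leibniz_recursion (hM : LogConvexSeq (mseq M)) (hpos : ∀ k, 0 < M k)
    {w : ℕ → ℝ} {δ : ℝ} (hC : 0 ≤ C) (hD : 0 ≤ D) (hσ : 0 < σ) (hδ : 0 < δ)
    (hzero : w 0 ≤ D * M 0)
    (hsucc : ∀ n, δ * w (n + 1) ≤ ∑ k ∈ Finset.range (n + 1),
      ((n + 1).choose (k + 1) : ℝ) * (C * σ ^ (k + 1) * M (k + 1)) * w (n - k)) (n : ℕ) :
    w n ≤ D * (σ * (1 + C * M 0 / δ)) ^ n * M n := by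
  set ρ := σ * (1 + C * M 0 / δ) with hρ
  have hM0 := hpos 0
  have : 0 < ρ := by positivity
  induction n using Nat.strong_induction_on with
  | _ n ih =>
    rcases n with _ | n
    · simpa only [pow_zero, mul_one] using hzero
    have hterm : ∀ k ∈ Finset.range (n + 1),
        ((n + 1).choose (k + 1) : ℝ) * (C * σ ^ (k + 1) * M (k + 1)) * w (n - k) ≤
          C * D * M 0 * M (n + 1) * (σ ^ (k + 1) * ρ ^ (n - k)) := by
      intro k hk
      have hkn : k + 1 + (n - k) = n + 1 := by have := Finset.mem_range.1 hk; omega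
      have hchoose := hM.choose_mul_mul_le hpos (k + 1) (n - k)
      rw [hkn] at hchoose
      have hMk := hpos (k + 1)
      calc _ ≤ ((n + 1).choose (k + 1) : ℝ) * (C * σ ^ (k + 1) * M (k + 1)) *
            (D * ρ ^ (n - k) * M (n - k)) := by
            gcongr; exact ih _ (by omega)
        _ = C * D * (σ ^ (k + 1) * ρ ^ (n - k)) *
            (((n + 1).choose (k + 1) : ℝ) * (M (k + 1) * M (n - k))) := by ring
        _ ≤ C * D * (σ ^ (k + 1) * ρ ^ (n - k)) * (M 0 * M (n + 1)) := by gcongr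
        _ = _ := by ring
    have hρσ : δ * (ρ - σ) = C * M 0 * σ := by rw [hρ]; field_simp; ring
    refine le_of_mul_le_mul_left ((hsucc n).trans ((Finset.sum_le_sum hterm).trans ?_)) hδ
    rw [← Finset.mul_sum]
    refine le_of_mul_le_mul_left ?_ hσ
    have := hpos (n + 1)
    calc _ = D * M (n + 1) * δ * ((ρ - σ) *
          ∑ k ∈ Finset.range (n + 1), σ ^ (k + 1) * ρ ^ (n - k)) := by
          linear_combination (-D * M (n + 1) *
            ∑ k ∈ Finset.range (n + 1), σ ^ (k + 1) * ρ ^ (n - k)) * hρσ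
      _ ≤ D * M (n + 1) * δ * (σ * ρ ^ (n + 1)) :=
          mul_le_mul_of_nonneg_left (sub_mul_sum_pow_mul_pow_le hσ.le n) (by positivity)
      _ = _ := by ring

end LeibnizEstimates

section Germs

variable {E : Type*} [NormedAddCommGroup E] [NormedSpace ℝ E]

/-- The germ of `f` at `a` is of class `E^{M}` (Roumieu): on some neighbourhood of `a`, `f` is
smooth with derivatives bounded by `C * σ ^ k * M k`. Smoothness is asked at all points near `a`,
since `ContDiffAt ℝ ∞ f a` does not provide a neighbourhood on which `f` is `C^∞`. -/
def IsRoumieuAt (M : ℕ → ℝ) (f : ℝ → E) (a : ℝ) : Prop :=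
  ∃ C > 0, ∃ σ > 0, ∀ᶠ x in 𝓝 a,
    ContDiffAt ℝ ∞ f x ∧ ∀ k, ‖iteratedDeriv k f x‖ ≤ C * σ ^ k * M k

namespace IsRoumieuAt

variable {M : ℕ → ℝ} {f g : ℝ → E} {a : ℝ}

lemma eventually_contDiffAt (hf : IsRoumieuAt M f a) : ∀ᶠ x in 𝓝 a, ContDiffAt ℝ ∞ f x := by
  obtain ⟨C, -, σ, -, h⟩ := hf
  exact h.mono fun x hx => hx.1

protected lemma continuousAt (hf : IsRoumieuAt M f a) : ContinuousAt f a :=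
  hf.eventually_contDiffAt.self_of_nhds.continuousAt

protected lemma congr (hf : IsRoumieuAt M f a) (hfg : f =ᶠ[𝓝 a] g) : IsRoumieuAt M g a := by
  obtain ⟨C, hC, σ, hσ, h⟩ := hf
  refine ⟨C, hC, σ, hσ, ?_⟩
  filter_upwards [h, hfg.eventuallyEq_nhds] with x hx hfgx
  exact ⟨hx.1.congr_of_eventuallyEq hfgx.symm, fun k => hfgx.iteratedDeriv_eq k ▸ hx.2 k⟩

lemma of_iteratedDeriv_eq_zero (hpos : ∀ k, 0 < M k) (hf : ContDiff ℝ ∞ f) {d : ℕ}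
    (hd : ∀ k, d ≤ k → iteratedDeriv k f = 0) : IsRoumieuAt M f a := by
  set c : ℕ → ℝ := fun k => (‖iteratedDeriv k f a‖ + 1) / M k
  have hc (k : ℕ) : 0 ≤ c k := div_nonneg (by positivity) (hpos k).le
  have hsum : 0 ≤ ∑ k ∈ Finset.range d, c k := Finset.sum_nonneg fun k _ => hc k
  have hnear : ∀ᶠ x in 𝓝 a, ∀ k ∈ Finset.range d,
      ‖iteratedDeriv k f x‖ < ‖iteratedDeriv k f a‖ + 1 :=
    (Finset.eventually_all _).2 fun k _ =>
      have hk := hf.continuous_iteratedDeriv k (by exact_mod_cast le_top)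
      hk.continuousAt.norm.eventually_lt_const (lt_add_one _)
  refine ⟨1 + ∑ k ∈ Finset.range d, c k, by positivity, 1, one_pos, ?_⟩
  filter_upwards [hnear] with x hx
  refine ⟨hf.contDiffAt, fun k => ?_⟩
  rw [one_pow, mul_one]
  rcases le_or_gt d k with hk | hk
  · rw [hd k hk, Pi.zero_apply, norm_zero]
    exact mul_nonneg (by positivity) (hpos k).le
  · rw [← div_le_iff₀ (hpos k)]
    have hk := Finset.mem_range.2 hk
    calc ‖iteratedDeriv k f x‖ / M k ≤ c k :=
          div_le_div_of_nonneg_right (hx k hk).le (hpos k).le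
      _ ≤ ∑ k ∈ Finset.range d, c k := Finset.single_le_sum (fun k _ => hc k) hk
      _ ≤ 1 + ∑ k ∈ Finset.range d, c k := le_add_of_nonneg_left zero_le_one

protected lemma const (hpos : ∀ k, 0 < M k) (c : E) : IsRoumieuAt M (fun _ => c) a :=
  of_iteratedDeriv_eq_zero hpos contDiff_const (d := 1) fun k hk => by
    ext x
    rw [iteratedDeriv_const, if_neg (Nat.one_le_iff_ne_zero.1 hk), Pi.zero_apply]

lemma sub_pow (hpos : ∀ k, 0 < M k) (b : ℝ) (p : ℕ) :
    IsRoumieuAt M (fun x : ℝ => (x - b) ^ p) a := by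
  refine of_iteratedDeriv_eq_zero hpos (by fun_prop) (d := p + 1) fun k hk => ?_
  ext x
  simp only [iteratedDeriv_comp_sub_const k (· ^ p) b, iteratedDeriv_pow,
    Nat.descFactorial_of_lt hk, Nat.cast_zero, zero_mul, Pi.zero_apply]

protected lemma smul {A : Type*} [NormedRing A] [NormedAlgebra ℝ A] [Module A E] [IsBoundedSMul A E]
    [IsScalarTower ℝ A E] (hM : LogConvexSeq M) (hpos : ∀ k, 0 < M k) {u : ℝ → A}
    (hu : IsRoumieuAt M u a) (hf : IsRoumieuAt M f a) : IsRoumieuAt M (u • f) a := by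
  obtain ⟨C, hC, σ, hσ, hu⟩ := hu
  obtain ⟨D, hD, τ, hτ, hf⟩ := hf
  refine ⟨C * D * M 0, mul_pos (mul_pos hC hD) (hpos 0), σ + τ, add_pos hσ hτ, ?_⟩
  filter_upwards [hu, hf] with x ⟨hux, hu⟩ ⟨hfx, hf⟩
  refine ⟨hux.smul hfx, fun n => ?_⟩
  have hleibniz : iteratedDeriv n (u • f) x = ∑ i ∈ Finset.range (n + 1),
      n.choose i • iteratedDeriv i u x • iteratedDeriv (n - i) f x := by
    simpa only [iteratedDerivWithin_univ] using iteratedDerivWithin_smul (mem_univ x)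
      uniqueDiffOn_univ (contDiffAt_infty.1 hux n).contDiffWithinAt
      (contDiffAt_infty.1 hfx n).contDiffWithinAt
  rw [hleibniz]
  refine (norm_sum_le_of_le _ fun i _ => ?_).trans
    (sum_choose_mul_mul_le hM hpos hC.le hD.le hσ.le hτ.le n)
  rw [mul_assoc]
  refine (norm_nsmul_le).trans ?_
  gcongr
  exact (norm_smul_le _ _).trans (mul_le_mul (hu i) (hf _) (norm_nonneg _)
    ((norm_nonneg _).trans (hu i)))

end IsRoumieuAt

variable {𝕜 : Type*} [NormedField 𝕜] [NormedAlgebra ℝ 𝕜] {M : ℕ → ℝ} {u : ℝ → 𝕜} {a : ℝ}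

lemma norm_mul_norm_iteratedDeriv_inv_le {x : ℝ} (hu : ContDiffAt ℝ ∞ u x) (hux : u x ≠ 0)
    (n : ℕ) :
    ‖u x‖ * ‖iteratedDeriv (n + 1) u⁻¹ x‖ ≤ ∑ k ∈ Finset.range (n + 1),
      ((n + 1).choose (k + 1) : ℝ) * ‖iteratedDeriv (k + 1) u x‖ *
        ‖iteratedDeriv (n - k) u⁻¹ x‖ := by
  have hone : u * u⁻¹ =ᶠ[𝓝 x] fun _ => 1 := by
    filter_upwards [hu.continuousAt.eventually_ne hux] with y hy using mul_inv_cancel₀ hy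
  have hleibniz := iteratedDeriv_mul (contDiffAt_infty.1 hu (n + 1))
    (contDiffAt_infty.1 (hu.inv hux) (n + 1))
  rw [hone.iteratedDeriv_eq, iteratedDeriv_const, if_neg n.succ_ne_zero, Finset.sum_range_succ',
    Nat.choose_zero_right, Nat.cast_one, one_mul, iteratedDeriv_zero, Nat.sub_zero] at hleibniz
  rw [← norm_mul, eq_neg_of_add_eq_zero_right hleibniz.symm, norm_neg]
  refine norm_sum_le_of_le _ fun k _ => ?_
  rw [Nat.add_sub_add_right, norm_mul, norm_mul]
  gcongr
  exact (Nat.norm_cast_le _).trans_eq (by rw [norm_one, mul_one])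

protected lemma IsRoumieuAt.inv (hM : LogConvexSeq (mseq M)) (hpos : ∀ k, 0 < M k)
    (hu : IsRoumieuAt M u a) (hua : u a ≠ 0) : IsRoumieuAt M u⁻¹ a := by
  have hcont := hu.continuousAt
  obtain ⟨C, hC, σ, hσ, hu⟩ := hu
  obtain ⟨δ, hδ, hδa⟩ := exists_between (norm_pos_iff.2 hua)
  have hM0 := hpos 0
  refine ⟨1 / (δ * M 0), by positivity, σ * (1 + C * M 0 / δ), by positivity, ?_⟩
  filter_upwards [hu, hcont.norm.eventually_const_lt hδa] with x ⟨hux, hu⟩ hδx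
  have hne : u x ≠ 0 := norm_pos_iff.1 (hδ.trans hδx)
  refine ⟨hux.inv hne, le_mul_pow_mul_of_leibniz_recursion hM hpos hC.le (by positivity) hσ hδ
    ?_ fun n => ?_⟩
  · rw [iteratedDeriv_zero, Pi.inv_apply, norm_inv]
    calc ‖u x‖⁻¹ ≤ δ⁻¹ := inv_anti₀ hδ hδx.le
      _ = _ := by field_simp
  · calc _ ≤ ‖u x‖ * ‖iteratedDeriv (n + 1) u⁻¹ x‖ := by gcongr
      _ ≤ _ := norm_mul_norm_iteratedDeriv_inv_le hux hne n
      _ ≤ _ := by gcongr with k _; exact hu (k + 1)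

lemma tendsto_reflect (a : ℝ) : Tendsto (fun x : ℝ => a + a - x) (𝓝 a) (𝓝 a) :=
  (continuous_const.sub continuous_id).tendsto' _ _ (add_sub_cancel_right a a)

namespace IsRoumieuAt

lemma comp_reflect {f : ℝ → E} (hf : IsRoumieuAt M f a) :
    IsRoumieuAt M (fun x => f (a + a - x)) a := by
  obtain ⟨C, hC, σ, hσ, h⟩ := hf
  refine ⟨C, hC, σ, hσ, ((tendsto_reflect a).eventually h).mono fun x ⟨hfx, hbound⟩ => ?_⟩
  refine ⟨hfx.comp x (by fun_prop), fun k => ?_⟩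
  rw [iteratedDeriv_comp_const_sub, norm_smul, norm_pow, norm_neg, norm_one, one_pow, one_mul]
  exact hbound k

lemma eventually_nhdsGE_eq_zero {f : ℝ → E} (hf : IsRoumieuAt M f a) (hM : LogConvexSeq M)
    (hpos : ∀ k, 0 < M k) (hq : Quasianalytic M) (hflat : ∀ n, iteratedDeriv n f a = 0) :
    ∀ᶠ x in 𝓝[≥] a, f x = 0 := by
  obtain ⟨C, hC, σ, hσ, hf⟩ := hf
  obtain ⟨b, hab, hb⟩ := mem_nhdsGE_iff_exists_Icc_subset.1 (mem_nhdsWithin_of_mem_nhds hf)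
  filter_upwards [Icc_mem_nhdsGE hab] with x hx
  exact eq_zero_of_flat_of_quasianalytic (hM.const_mul_pow_mul C σ)
    (fun k => mul_pos (mul_pos hC (pow_pos hσ k)) (hpos k)) (hq.const_mul_pow_mul hC.ne' hσ.ne')
    (fun y hy => (hb hy).1) (fun y hy => (hb hy).2) hflat hx

theorem eventuallyEq_zero_of_iteratedDeriv_eq_zero {f : ℝ → E} (hf : IsRoumieuAt M f a)
    (hM : LogConvexSeq M) (hpos : ∀ k, 0 < M k) (hq : Quasianalytic M)
    (hflat : ∀ n, iteratedDeriv n f a = 0) : f =ᶠ[𝓝 a] 0 := by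
  have hright := hf.eventually_nhdsGE_eq_zero hM hpos hq hflat
  have hleft : ∀ᶠ x in 𝓝[≤] a, f x = 0 := by
    have hflip := hf.comp_reflect.eventually_nhdsGE_eq_zero hM hpos hq fun n => by
      simp only [iteratedDeriv_comp_const_sub, add_sub_cancel_right, hflat, smul_zero]
    have hmap : Tendsto (fun x : ℝ => a + a - x) (𝓝[≤] a) (𝓝[≥] a) := by
      refine tendsto_nhdsWithin_iff.2 ⟨(tendsto_reflect a).mono_left nhdsWithin_le_nhds, ?_⟩
      filter_upwards [self_mem_nhdsWithin] with x hx
      exact mem_Ici.2 (by linarith [mem_Iic.1 hx])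
    simpa only [sub_sub_cancel] using hmap.eventually hflip
  rw [EventuallyEq, ← nhdsLE_sup_nhdsGE, eventually_sup]
  exact ⟨hleft, hright⟩

end IsRoumieuAt

/-- The `n`-th moment of `f` along the segment from `a` to `x`. Differentiating in `x` turns the
moment of order `n` of `f` into the moment of order `n + 1` of `f'`. -/
def segmentMoment (a : ℝ) (n : ℕ) (f : ℝ → E) (x : ℝ) : E :=
  ∫ t in (0 : ℝ)..1, t ^ n • f (a + (x - a) * t)

section SegmentMoment

variable {f : ℝ → E} {r x : ℝ}

lemma add_sub_mul_mem_ball {t : ℝ} (hx : x ∈ Metric.ball a r) (ht : t ∈ Icc (0 : ℝ) 1) :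
    a + (x - a) * t ∈ Metric.ball a r := by
  rw [mul_comm]
  exact (convex_ball a r).add_smul_sub_mem (Metric.mem_ball_self (Metric.pos_of_mem_ball hx)) hx ht

lemma norm_pow_smul_comp_segment_le {B t : ℝ} (hx : x ∈ Metric.ball a r)
    (hB : ∀ y ∈ Metric.ball a r, ‖f y‖ ≤ B) (n : ℕ) (ht : t ∈ uIoc (0 : ℝ) 1) :
    ‖t ^ n • f (a + (x - a) * t)‖ ≤ B := by
  rw [uIoc_of_le zero_le_one] at ht
  rw [norm_smul, norm_pow, Real.norm_of_nonneg ht.1.le]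
  calc _ ≤ 1 * ‖f (a + (x - a) * t)‖ := by gcongr; exact pow_le_one₀ ht.1.le ht.2
    _ ≤ B := (one_mul _).trans_le (hB _ (add_sub_mul_mem_ball hx (Ioc_subset_Icc_self ht)))

lemma norm_segmentMoment_le {B : ℝ} (hx : x ∈ Metric.ball a r)
    (hB : ∀ y ∈ Metric.ball a r, ‖f y‖ ≤ B) (n : ℕ) : ‖segmentMoment a n f x‖ ≤ B := by
  simpa only [segmentMoment, sub_zero, abs_one, mul_one] using
    intervalIntegral.norm_integral_le_of_norm_le_const fun t ht =>
      norm_pow_smul_comp_segment_le hx hB n ht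

lemma intervalIntegrable_pow_smul_comp_segment (hf : ContinuousOn f (Metric.ball a r))
    (hx : x ∈ Metric.ball a r) (n : ℕ) :
    IntervalIntegrable (fun t => t ^ n • f (a + (x - a) * t)) volume 0 1 := by
  refine ContinuousOn.intervalIntegrable_of_Icc zero_le_one ?_
  exact (continuousOn_id.pow n).smul (hf.comp (by fun_prop) fun t ht => add_sub_mul_mem_ball hx ht)

lemma hasDerivAt_segmentMoment (hf : ContDiffOn ℝ 1 f (Metric.ball a r))
    (hx : x ∈ Metric.ball a r) (n : ℕ) :
    HasDerivAt (segmentMoment a n f) (segmentMoment a (n + 1) (deriv f) x) x := by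
  have hderiv := hf.continuousOn_deriv_of_isOpen Metric.isOpen_ball le_rfl
  obtain ⟨ρ, hxρ, hρr⟩ := exists_between (Metric.mem_ball.1 hx)
  have hsub : Metric.closedBall a ρ ⊆ Metric.ball a r := Metric.closedBall_subset_ball hρr
  obtain ⟨B, hB⟩ := (isCompact_closedBall a ρ).exists_bound_of_continuousOn (hderiv.mono hsub)
  have hnhds : Metric.ball a ρ ∈ 𝓝 x := Metric.isOpen_ball.mem_nhds hxρ
  have hmem {y : ℝ} (hy : y ∈ Metric.ball a ρ) : y ∈ Metric.ball a r :=
    hsub (Metric.ball_subset_closedBall hy)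
  have hint {y : ℝ} (hy : y ∈ Metric.ball a ρ) :=
    intervalIntegrable_pow_smul_comp_segment hf.continuousOn (hmem hy) n
  refine (intervalIntegral.hasDerivAt_integral_of_dominated_loc_of_deriv_le
    (F' := fun y t => t ^ (n + 1) • deriv f (a + (y - a) * t)) (bound := fun _ => B) hnhds
    ?_ (hint hxρ) (intervalIntegrable_pow_smul_comp_segment hderiv hx _).def'.aestronglyMeasurable
    ?_ intervalIntegrable_const ?_).2
  · filter_upwards [hnhds] with y hy using (hint hy).def'.aestronglyMeasurable
  · exact .of_forall fun t ht y hy => norm_pow_smul_comp_segment_le hy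
      (fun z hz => hB z (Metric.ball_subset_closedBall hz)) _ ht
  · refine .of_forall fun t ht y hy => ?_
    have hyt := add_sub_mul_mem_ball (hmem hy)
      (Ioc_subset_Icc_self (uIoc_of_le (zero_le_one' ℝ) ▸ ht))
    have hfy := (hf.differentiableOn one_ne_zero).hasDerivAt (Metric.isOpen_ball.mem_nhds hyt)
    have hseg : HasDerivAt (fun y => a + (y - a) * t) t y := by
      simpa only [one_mul] using (((hasDerivAt_id' y).sub_const a).mul_const t).const_add a
    exact ((hfy.scomp y hseg).const_smul (t ^ n)).congr_deriv (by rw [smul_smul, pow_succ])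

lemma contDiffOn_segmentMoment (hf : ContDiffOn ℝ ∞ f (Metric.ball a r)) (n : ℕ) :
    ContDiffOn ℝ ∞ (segmentMoment a n f) (Metric.ball a r) := by
  rw [contDiffOn_infty]
  intro k
  induction k generalizing f n with
  | zero =>
    exact contDiffOn_zero.2 fun x hx =>
      (hasDerivAt_segmentMoment (hf.of_le (by simp)) hx n).continuousAt.continuousWithinAt
  | succ k ih =>
    have hderiv (x : ℝ) (hx : x ∈ Metric.ball a r) :=
      hasDerivAt_segmentMoment (hf.of_le (by simp)) hx n
    push_cast
    refine (contDiffOn_succ_iff_deriv_of_isOpen Metric.isOpen_ball).2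
      ⟨fun x hx => (hderiv x hx).differentiableAt.differentiableWithinAt, by simp, ?_⟩
    exact (ih (hf.deriv_of_isOpen Metric.isOpen_ball (by simp)) _).congr
      fun x hx => (hderiv x hx).deriv

lemma iteratedDeriv_segmentMoment (hf : ContDiffOn ℝ ∞ f (Metric.ball a r)) (n k : ℕ) :
    EqOn (iteratedDeriv k (segmentMoment a n f)) (segmentMoment a (n + k) (iteratedDeriv k f))
      (Metric.ball a r) := by
  induction k generalizing f n with
  | zero => simp only [iteratedDeriv_zero, add_zero, EqOn, implies_true]
  | succ k ih =>
    have hderiv : EqOn (deriv (segmentMoment a n f)) (segmentMoment a (n + 1) (deriv f))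
        (Metric.ball a r) := fun x hx =>
      (hasDerivAt_segmentMoment (hf.of_le (by simp)) hx n).deriv
    rw [iteratedDeriv_succ', iteratedDeriv_succ', Nat.add_comm k, ← Nat.add_assoc]
    exact (hderiv.iteratedDeriv_of_isOpen Metric.isOpen_ball k).trans
      (ih (hf.deriv_of_isOpen Metric.isOpen_ball (by simp)) _)

variable [CompleteSpace E]

lemma segmentMoment_self (n : ℕ) : segmentMoment a n f a = ((n : ℝ) + 1)⁻¹ • f a := by
  simp only [segmentMoment, sub_self, zero_mul, add_zero, intervalIntegral.integral_smul_const,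
    integral_pow, one_pow, zero_pow n.succ_ne_zero, sub_zero, one_div]

lemma dslope_eqOn_segmentMoment (hf : ContDiffOn ℝ 1 f (Metric.ball a r)) :
    EqOn (dslope f a) (segmentMoment a 0 (deriv f)) (Metric.ball a r) := by
  intro x hx
  rcases eq_or_ne x a with rfl | hxa
  · rw [dslope_same, segmentMoment_self, Nat.cast_zero, zero_add, inv_one, one_smul]
  have hsub : uIcc a x ⊆ Metric.ball a r := by
    rw [← segment_eq_uIcc]
    exact (convex_ball a r).segment_subset
      (Metric.mem_ball_self (Metric.pos_of_mem_ball hx)) hx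
  have hftc : ∫ t in a..x, deriv f t = f x - f a :=
    intervalIntegral.integral_deriv_eq_sub
      (fun y hy => (hf.differentiableOn one_ne_zero).differentiableAt
        (Metric.isOpen_ball.mem_nhds (hsub hy)))
      ((hf.continuousOn_deriv_of_isOpen Metric.isOpen_ball le_rfl).mono hsub).intervalIntegrable
  rw [dslope_of_ne f hxa, slope, vsub_eq_sub, ← hftc, inv_smul_eq_iff₀ (sub_ne_zero.2 hxa),
    segmentMoment]
  simp only [pow_zero, one_smul, intervalIntegral.smul_integral_comp_add_mul, mul_zero, add_zero,
    mul_one, add_sub_cancel]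

end SegmentMoment

lemma IsRoumieuAt.exists_contDiffOn_ball {f : ℝ → E} (hf : IsRoumieuAt M f a) :
    ∃ r > 0, ContDiffOn ℝ ∞ f (Metric.ball a r) := by
  obtain ⟨r, hr, h⟩ := Metric.eventually_nhds_iff_ball.1 hf.eventually_contDiffAt
  exact ⟨r, hr, fun x hx => (h x hx).contDiffWithinAt⟩

namespace IsRoumieuAt

variable {f : ℝ → E}

protected lemma deriv (hdc : DerivClosed M) (hf : IsRoumieuAt M f a) :
    IsRoumieuAt M (deriv f) a := by
  obtain ⟨C, hC, σ, hσ, h⟩ := hf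
  obtain ⟨D, hD, hdc⟩ := hdc
  refine ⟨C * σ * D, by positivity, σ * D, by positivity, h.mono fun x ⟨hfx, hbound⟩ => ?_⟩
  refine ⟨hfx.derivWithin (by simp), fun k => ?_⟩
  rw [← iteratedDeriv_succ']
  calc _ ≤ C * σ ^ (k + 1) * M (k + 1) := hbound (k + 1)
    _ ≤ C * σ ^ (k + 1) * (D ^ (k + 1) * M k) := by gcongr; exact hdc k
    _ = C * σ * D * (σ * D) ^ k * M k := by ring

protected lemma segmentMoment (hf : IsRoumieuAt M f a) (n : ℕ) :
    IsRoumieuAt M (segmentMoment a n f) a := by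
  obtain ⟨C, hC, σ, hσ, h⟩ := hf
  obtain ⟨r, hr, h⟩ := Metric.eventually_nhds_iff_ball.1 h
  have hsmooth : ContDiffOn ℝ ∞ f (Metric.ball a r) := fun x hx => (h x hx).1.contDiffWithinAt
  refine ⟨C, hC, σ, hσ, ?_⟩
  filter_upwards [Metric.ball_mem_nhds a hr] with x hx
  refine ⟨(contDiffOn_segmentMoment hsmooth n).contDiffAt (Metric.isOpen_ball.mem_nhds hx),
    fun k => ?_⟩
  rw [iteratedDeriv_segmentMoment hsmooth n k hx]
  exact norm_segmentMoment_le hx (fun y hy => (h y hy).2 k) _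

variable [CompleteSpace E]

protected lemma dslope (hdc : DerivClosed M) (hf : IsRoumieuAt M f a) :
    IsRoumieuAt M (dslope f a) a := by
  obtain ⟨r, hr, hsmooth⟩ := hf.exists_contDiffOn_ball
  refine ((hf.deriv hdc).segmentMoment 0).congr ?_
  filter_upwards [Metric.ball_mem_nhds a hr] with x hx
  exact (dslope_eqOn_segmentMoment (hsmooth.of_le (by simp)) hx).symm

lemma iteratedDeriv_dslope (hf : IsRoumieuAt M f a) (k : ℕ) :
    iteratedDeriv k (dslope f a) a = ((k : ℝ) + 1)⁻¹ • iteratedDeriv (k + 1) f a := by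
  obtain ⟨r, hr, hsmooth⟩ := hf.exists_contDiffOn_ball
  have ha : a ∈ Metric.ball a r := Metric.mem_ball_self hr
  rw [(dslope_eqOn_segmentMoment (hsmooth.of_le (by simp))).iteratedDeriv_of_isOpen
    Metric.isOpen_ball k ha, iteratedDeriv_segmentMoment
    (hsmooth.deriv_of_isOpen Metric.isOpen_ball (by simp)) 0 k ha, segmentMoment_self, zero_add,
    iteratedDeriv_succ']

theorem exists_eq_pow_smul (hdc : DerivClosed M) (hf : IsRoumieuAt M f a) {n : ℕ}
    (hn : iteratedDeriv n f a ≠ 0) :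
    ∃ p u, IsRoumieuAt M u a ∧ u a ≠ 0 ∧ ∀ x, f x = (x - a) ^ p • u x := by
  induction n generalizing f with
  | zero => exact ⟨0, f, hf, hn, fun x => by rw [pow_zero, one_smul]⟩
  | succ n ih =>
    by_cases hfa : f a = 0
    · obtain ⟨p, u, hu, hua, hfu⟩ := ih (hf.dslope hdc) <| by
        rw [hf.iteratedDeriv_dslope]
        exact smul_ne_zero (by positivity) hn
      refine ⟨p + 1, u, hu, hua, fun x => ?_⟩
      rw [← sub_smul_dslope_of_zero hfa x, hfu, smul_smul, pow_succ']
    · exact ⟨0, f, hf, hfa, fun x => by rw [pow_zero, one_smul]⟩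

theorem eventuallyEq_zero_or_exists_eq_pow_smul (hM : LogConvexSeq M) (hpos : ∀ k, 0 < M k)
    (hq : Quasianalytic M) (hdc : DerivClosed M) (hf : IsRoumieuAt M f a) :
    f =ᶠ[𝓝 a] 0 ∨ ∃ p u, IsRoumieuAt M u a ∧ u a ≠ 0 ∧ ∀ x, f x = (x - a) ^ p • u x := by
  by_cases hflat : ∀ n, iteratedDeriv n f a = 0
  · exact .inl (hf.eventuallyEq_zero_of_iteratedDeriv_eq_zero hM hpos hq hflat)
  · obtain ⟨n, hn⟩ := not_forall.1 hflat
    exact .inr (hf.exists_eq_pow_smul hdc hn)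

end IsRoumieuAt

lemma le_of_pow_smul_eventuallyEq {u v : ℝ → E} {m n : ℕ} (hu : ContinuousAt u a)
    (hv : ContinuousAt v a) (hua : u a ≠ 0)
    (h : (fun x => (x - a) ^ n • u x) =ᶠ[𝓝[≠] a] fun x => (x - a) ^ m • v x) : m ≤ n := by
  by_contra! hnm
  obtain ⟨d, rfl⟩ := Nat.exists_eq_add_of_lt hnm
  have hcancel : u =ᶠ[𝓝[≠] a] fun x => (x - a) ^ (d + 1) • v x := by
    filter_upwards [h, self_mem_nhdsWithin] with x hx hxa
    rw [add_assoc, pow_add, mul_smul] at hx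
    exact (smul_right_inj (pow_ne_zero n (sub_ne_zero.2 hxa))).1 hx
  have heq := ((hu.eventuallyEq_nhds_iff_eventuallyEq_nhdsNE (by fun_prop)).1 hcancel).eq_of_nhds
  exact hua (by rw [heq, sub_self, zero_pow d.succ_ne_zero, zero_smul])

lemma eq_pow_smul_mul_inv {t : ℝ} {y z w : 𝕜} {j n d : ℕ} (hz : z ≠ 0) (hj : y ^ j = t ^ n • z)
    (hsucc : y ^ (j + 1) = t ^ (n + d) • w) (hnd : n ≤ d * j) : y = t ^ d • (w * z⁻¹) := by
  rcases eq_or_ne (t ^ n) 0 with ht | ht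
  · rw [pow_eq_zero_iff'] at ht
    rw [ht.1, zero_pow ht.2, zero_smul] at hj
    rw [eq_zero_of_pow_eq_zero hj, ht.1, zero_pow, zero_smul]
    rintro rfl
    exact ht.2 (by simpa using hnd)
  · rw [← smul_mul_assoc, eq_mul_inv_iff_mul_eq₀ hz, ← smul_right_inj ht, smul_smul, ← pow_add,
      ← hsucc, ← mul_smul_comm, ← hj, pow_succ']

theorem IsRoumieuAt.of_pow_of_pow_succ [CompleteSpace 𝕜] (hM : LogConvexSeq (mseq M))
    (hpos : ∀ k, 0 < M k) (hq : Quasianalytic M) (hdc : DerivClosed M) {f : ℝ → 𝕜} {j : ℕ}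
    (hj : 1 ≤ j) (hfj : IsRoumieuAt M (f ^ j) a) (hfsucc : IsRoumieuAt M (f ^ (j + 1)) a) :
    IsRoumieuAt M f a := by
  have hMlc := hM.of_mseq
  have hzero {k : ℕ} (hk : f ^ k =ᶠ[𝓝 a] 0) : IsRoumieuAt M f a :=
    (IsRoumieuAt.const hpos 0).congr <| hk.mono fun x hx => (eq_zero_of_pow_eq_zero hx).symm
  rcases hfj.eventuallyEq_zero_or_exists_eq_pow_smul hMlc hpos hq hdc with
    hfj0 | ⟨n, u, hu, hua, hfu⟩
  · exact hzero hfj0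
  rcases hfsucc.eventuallyEq_zero_or_exists_eq_pow_smul hMlc hpos hq hdc with
    hfsucc0 | ⟨p, v, hv, hva, hfv⟩
  · exact hzero hfsucc0
  have horder : n * (j + 1) ≤ p * j := by
    refine le_of_pow_smul_eventuallyEq (hv.continuousAt.pow j) (hu.continuousAt.pow (j + 1))
      (pow_ne_zero j hva) (.of_forall fun x => ?_)
    calc (x - a) ^ (p * j) • v x ^ j = ((f ^ (j + 1)) x) ^ j := by rw [hfv, smul_pow, pow_mul]
      _ = ((f ^ j) x) ^ (j + 1) := pow_right_comm _ _ _
      _ = (x - a) ^ (n * (j + 1)) • u x ^ (j + 1) := by rw [hfu, smul_pow, pow_mul]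
  obtain ⟨d, rfl⟩ : ∃ d, p = n + d := Nat.exists_eq_add_of_le <|
    Nat.le_of_mul_le_mul_right ((Nat.mul_le_mul_left n j.le_succ).trans horder) hj
  have hquot : IsRoumieuAt M ((fun x => (x - a) ^ d) • (v • u⁻¹)) a :=
    (IsRoumieuAt.sub_pow hpos a d).smul hMlc hpos (hv.smul hMlc hpos (hu.inv hM hpos hua))
  refine hquot.congr ?_
  filter_upwards [hu.continuousAt.eventually_ne hua] with x hux
  exact (eq_pow_smul_mul_inv hux (hfu x) (hfv x) (by linarith)).symm

lemma isRoumieuAt_iff_exists_roumieuOn {f : ℝ → ℂ} :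
    IsRoumieuAt M f a ↔ ∃ U : Set ℝ, IsOpen U ∧ a ∈ U ∧ RoumieuOn M f U := by
  constructor
  · rintro ⟨C, hC, σ, hσ, h⟩
    obtain ⟨r, hr, h⟩ := Metric.eventually_nhds_iff_ball.1 h
    refine ⟨Metric.ball a r, Metric.isOpen_ball, Metric.mem_ball_self hr,
      fun x hx => (h x hx).1.contDiffWithinAt, fun V _ _ hV => ⟨C, σ, hC, hσ, fun x hx k => ?_⟩⟩
    have hxr := hV (subset_closure hx)
    rw [norm_iteratedFDerivWithin_eq_norm_iteratedDerivWithin,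
      iteratedDerivWithin_of_isOpen Metric.isOpen_ball hxr]
    exact (h x hxr).2 k
  · rintro ⟨U, hU, ha, hf, hbound⟩
    obtain ⟨r, hr, hrU⟩ := Metric.nhds_basis_closedBall.mem_iff.1 (hU.mem_nhds ha)
    have hclosure : closure (Metric.ball a r) = Metric.closedBall a r := closure_ball a hr.ne'
    obtain ⟨C, σ, hC, hσ, h⟩ := hbound (Metric.ball a r) Metric.isOpen_ball
      (hclosure ▸ isCompact_closedBall a r) (hclosure ▸ hrU)
    refine ⟨C, hC, σ, hσ, ?_⟩
    filter_upwards [Metric.ball_mem_nhds a hr] with x hx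
    have hxU := hrU (Metric.ball_subset_closedBall hx)
    refine ⟨hf.contDiffAt (hU.mem_nhds hxU), fun k => ?_⟩
    rw [← iteratedDerivWithin_of_isOpen hU hxU,
      ← norm_iteratedFDerivWithin_eq_norm_iteratedDerivWithin]
    exact h x hx k

end Germs

/-- the ring of germs at `0 ∈ ℝ` of `E^{M}`-functions has property (D)
for a quasianalytic derivation closed weight sequence `M` with `m` log-convex. -/
theorem statement2 (M : ℕ → ℝ)
    (hM : IsWeightSeq M) (hq : Quasianalytic M) (hdc : DerivClosed M)
    (hmlc : LogConvexSeq (mseq M))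
    (f : ℝ → ℂ) (j : ℕ) (hj : 1 ≤ j)
    (h1 : ∃ U : Set ℝ, IsOpen U ∧ (0 : ℝ) ∈ U ∧ RoumieuOn M (f ^ j) U)
    (h2 : ∃ U : Set ℝ, IsOpen U ∧ (0 : ℝ) ∈ U ∧ RoumieuOn M (f ^ (j + 1)) U) :
    ∃ U : Set ℝ, IsOpen U ∧ (0 : ℝ) ∈ U ∧ RoumieuOn M f U := by
  obtain ⟨-, hpos, -⟩ := hM
  rw [← isRoumieuAt_iff_exists_roumieuOn] at h1 h2 ⊢
  exact .of_pow_of_pow_succ hmlc hpos hq hdc hj h1 h2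
end
end

section
/- Let L and M be positive sequences with L_0 = M_0 = 1 satisfying L ◁ M, i.e. (L_k/M_k)^{1/k} → 0 as k → ∞. Suppose m_k := M_k/k! is log-convex and m_k^{1/k} → ∞. Then there exists a weight sequence S such that s_k := S_k/k! is log-convex, s_k^{1/k} → ∞, L_k ≤ S_k for all k, and S ◁ M. Additionally S can be chosen such that: (i) if M has moderate growth then S has moderate growth; (ii) if M is derivation closed then S is derivation closed; (iii) if M is non-quasianalytic then S is non-quasianalytic. -/
open Filter Set Asymptotics MeasureTheory

noncomputable section

/-! The sequence `S` is obtained by damping `M`: `S k = M k * exp (-(e 0 + ⋯ + e (k - 1)))` with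
`e` nondecreasing and tending to infinity. In logarithms, every requirement on `S` is a linear
condition on `e`. With `a k = log (m (k + 1) / m k)`, which is nondecreasing and unbounded because
`m` is log-convex and `m k ^ (1/k) → ∞`, one needs `a - e` to be nondecreasing and unbounded
(log-convexity and root growth of `s`), `e 0 ≤ a 0` (which gives `1 ≤ S 1`),
`e k ≤ log (M k / L k) / k` (which gives `L ≤ S`), and, if `M` is non-quasianalytic, `e ≤ y` for
some `y → ∞` with `∑ M k / M (k + 1) * exp (y k) < ∞`. Such an `e` is the inf-convolution
`e k = inf_j (r j + max (a k - a j) 0 / 2)`, where `r` is the minimum of the prescribed upper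
bounds: it grows at most half as fast as `a`. Moderate growth and derivation closedness survive
the damping because partial sums of a nondecreasing sequence are superadditive and `e` is bounded
below. -/

section SlopeMinorant

variable {ι : Type*} {h r : ι → ℝ}

/-- The largest nondecreasing minorant of `r` whose increments are bounded by those of `h`, when
`h` is nondecreasing and `r` is bounded below: the inf-convolution of `r` with the asymmetric
distance `max (h k - h j) 0` (a one-sided McShane regularization). -/
def slopeMinorant (h r : ι → ℝ) (k : ι) : ℝ := ⨅ j, (r j + max (h k - h j) 0)

lemma bddBelow_range_add_max (hr : BddBelow (range r)) (k : ι) :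
    BddBelow (range fun j => r j + max (h k - h j) 0) := by
  obtain ⟨B, hB⟩ := hr
  refine ⟨B, ?_⟩
  rintro _ ⟨j, rfl⟩
  exact le_add_of_le_of_nonneg (hB (mem_range_self j)) (le_max_right _ _)

lemma slopeMinorant_le (hr : BddBelow (range r)) (k : ι) : slopeMinorant h r k ≤ r k :=
  (ciInf_le (bddBelow_range_add_max hr k) k).trans_eq (by simp)

lemma monotone_slopeMinorant [Preorder ι] (hh : Monotone h) (hr : BddBelow (range r)) :
    Monotone (slopeMinorant h r) := fun k l hkl =>
  ciInf_mono (bddBelow_range_add_max hr k) fun j => by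
    have := hh hkl
    gcongr

lemma monotone_sub_slopeMinorant [Preorder ι] (hh : Monotone h) (hr : BddBelow (range r)) :
    Monotone fun k => h k - slopeMinorant h r k := fun k l hkl => by
  have : Nonempty ι := ⟨k⟩
  suffices slopeMinorant h r l - (h l - h k) ≤ slopeMinorant h r k by
    dsimp only
    linarith
  refine le_ciInf fun j => ?_
  have hinf : slopeMinorant h r l ≤ r j + max (h l - h j) 0 :=
    ciInf_le (bddBelow_range_add_max hr l) j
  have hmax : max (h l - h j) 0 ≤ max (h k - h j) 0 + (h l - h k) :=
    max_le (by linarith [le_max_left (h k - h j) 0])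
      (by linarith [le_max_right (h k - h j) 0, hh hkl])
  linarith

lemma tendsto_slopeMinorant [LinearOrder ι] [Nonempty ι] (hh : Monotone h)
    (hh_top : Tendsto h atTop atTop) (hr : BddBelow (range r)) (hr_top : Tendsto r atTop atTop) :
    Tendsto (slopeMinorant h r) atTop atTop := by
  refine tendsto_atTop.2 fun C => ?_
  obtain ⟨B, hB⟩ := hr
  obtain ⟨N, hN⟩ := eventually_atTop.1 (tendsto_atTop.1 hr_top C)
  filter_upwards [tendsto_atTop.1 hh_top (h N + C - B)] with k hk
  refine le_ciInf fun j => ?_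
  rcases le_total N j with hj | hj
  · exact le_add_of_le_of_nonneg (hN j hj) (le_max_right _ _)
  · linarith [hB (mem_range_self j), hh hj, le_max_left (h k - h j) 0]

end SlopeMinorant

lemma exists_monotone_le_monotone_sub {a r : ℕ → ℝ} (ha : Monotone a)
    (ha_top : Tendsto a atTop atTop) (hr_top : Tendsto r atTop atTop) :
    ∃ e : ℕ → ℝ, Monotone e ∧ Tendsto e atTop atTop ∧ (∀ k, e k ≤ r k) ∧
      Monotone (fun k => a k - e k) ∧ Tendsto (fun k => a k - e k) atTop atTop := by
  have hr := bddBelow_range_of_tendsto_atTop_atTop hr_top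
  set h : ℕ → ℝ := fun k => a k / 2 with h_def
  have hh : Monotone h := fun _ _ hkl => div_le_div_of_nonneg_right (ha hkl) two_pos.le
  have hh_top : Tendsto h atTop atTop := ha_top.atTop_div_const two_pos
  have hsplit : (fun k => a k - slopeMinorant h r k) =
      fun k => h k + (h k - slopeMinorant h r k) := funext fun k => by
    simp only [h_def]
    ring
  have hsub := monotone_sub_slopeMinorant hh hr
  refine ⟨slopeMinorant h r, monotone_slopeMinorant hh hr,
    tendsto_slopeMinorant hh hh_top hr hr_top, slopeMinorant_le hr,
    hsplit ▸ hh.add hsub, hsplit ▸ ?_⟩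
  exact tendsto_atTop_add_right_of_le atTop _ hh_top fun k => hsub k.zero_le

section Increments

lemma sum_range_le_mul_of_monotone {e : ℕ → ℝ} (he : Monotone e) (k : ℕ) :
    ∑ j ∈ Finset.range k, e j ≤ k * e k := by
  simpa using Finset.sum_le_card_nsmul (Finset.range k) e (e k)
    fun j hj => he (Finset.mem_range.1 hj).le

lemma sum_range_add_sum_range_le_of_monotone {e : ℕ → ℝ} (he : Monotone e) (j k : ℕ) :
    ∑ i ∈ Finset.range j, e i + ∑ i ∈ Finset.range k, e i ≤ ∑ i ∈ Finset.range (j + k), e i := by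
  rw [Finset.sum_range_add]
  gcongr with i
  exact he (Nat.le_add_left i j)

lemma tendsto_div_natCast_atTop_of_tendsto_sub {u : ℕ → ℝ}
    (hu : Tendsto (fun k => u (k + 1) - u k) atTop atTop) :
    Tendsto (fun k : ℕ => u k / k) atTop atTop := by
  refine tendsto_atTop.2 fun C => ?_
  obtain ⟨N, hN⟩ := eventually_atTop.1 (tendsto_atTop.1 hu (C + 1))
  have hmono : MonotoneOn (fun k : ℕ => u k - (C + 1) * k) (Ici N) :=
    monotoneOn_nat_Ici_of_le_succ fun k hk => by
      push_cast
      linarith [hN k hk]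
  filter_upwards [eventually_ge_atTop N, eventually_gt_atTop 0,
    tendsto_natCast_atTop_atTop.eventually_ge_atTop (-(u N - (C + 1) * N))] with k hNk hk hkN
  rw [le_div_iff₀ (Nat.cast_pos.2 hk)]
  have := hmono self_mem_Ici hNk hNk
  dsimp only at this
  linarith

lemma tendsto_sub_atTop_of_monotone_sub {u : ℕ → ℝ} (hmono : Monotone fun k => u (k + 1) - u k)
    (hu : Tendsto (fun k : ℕ => u k / k) atTop atTop) :
    Tendsto (fun k => u (k + 1) - u k) atTop atTop := by
  refine tendsto_atTop_mono' atTop ?_ (tendsto_atTop_add_const_right atTop (-|u 0|) hu)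
  filter_upwards [eventually_ge_atTop 1] with k hk
  have hk' : (1 : ℝ) ≤ k := Nat.one_le_cast.2 hk
  have hsum : u k - u 0 ≤ k * (u (k + 1) - u k) := by
    simpa only [Finset.sum_range_sub] using sum_range_le_mul_of_monotone hmono k
  rw [← sub_eq_add_neg, sub_le_iff_le_add, div_le_iff₀ (by positivity)]
  nlinarith [le_abs_self (u 0), abs_nonneg (u 0)]

end Increments

section SummableWeights

lemma summable_sub_div_sqrt {T : ℕ → ℝ} (hT : Antitone T) (hT0 : ∀ k, 0 ≤ T k) :
    Summable fun k => (T k - T (k + 1)) / √(T k) := by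
  have hle (k : ℕ) : (T k - T (k + 1)) / √(T k) ≤ 2 * √(T k) - 2 * √(T (k + 1)) := by
    have hsqrt : √(T (k + 1)) ≤ √(T k) := Real.sqrt_le_sqrt (hT k.le_succ)
    refine div_le_of_le_mul₀ (Real.sqrt_nonneg _) (by linarith) ?_
    nlinarith [Real.sq_sqrt (hT0 k), Real.sq_sqrt (hT0 (k + 1))]
  refine summable_of_sum_range_le (c := 2 * √(T 0))
    (fun k => div_nonneg (sub_nonneg.2 (hT k.le_succ)) (Real.sqrt_nonneg _)) fun n => ?_
  calc ∑ k ∈ Finset.range n, (T k - T (k + 1)) / √(T k)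
      ≤ ∑ k ∈ Finset.range n, (2 * √(T k) - 2 * √(T (k + 1))) := Finset.sum_le_sum fun k _ => hle k
    _ = 2 * √(T 0) - 2 * √(T n) := Finset.sum_range_sub' (fun k => 2 * √(T k)) n
    _ ≤ 2 * √(T 0) := sub_le_self _ (by positivity)

lemma exists_tendsto_atTop_summable_mul_exp {x : ℕ → ℝ} (hx : ∀ k, 0 ≤ x k) (hs : Summable x) :
    ∃ y : ℕ → ℝ, Tendsto y atTop atTop ∧ Summable fun k => x k * Real.exp (y k) := by
  -- The geometric term makes all tails positive; the weights are `1 / √(tail)`.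
  set w : ℕ → ℝ := fun k => x k + (1 / 2) ^ k
  have hw : Summable w := hs.add summable_geometric_two
  have hw_pos (k : ℕ) : 0 < w k := add_pos_of_nonneg_of_pos (hx k) (by positivity)
  set T : ℕ → ℝ := fun k => ∑' j, w (j + k)
  have hT_sub (k : ℕ) : T k - T (k + 1) = w k := by
    have hsplit := ((summable_nat_add_iff k).2 hw).tsum_eq_zero_add
    simp only [zero_add, add_right_comm _ 1 k] at hsplit
    exact sub_eq_of_eq_add hsplit
  have hT_pos (k : ℕ) : 0 < T k :=
    ((summable_nat_add_iff k).2 hw).tsum_pos (fun j => (hw_pos _).le) 0 (hw_pos _)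
  have hT_anti : Antitone T :=
    antitone_nat_of_succ_le fun k => sub_nonneg.1 ((hT_sub k).symm ▸ (hw_pos k).le)
  have hT_tendsto : Tendsto (fun k => √(T k)) atTop (nhdsWithin 0 (Ioi 0)) :=
    tendsto_nhdsWithin_iff.2 ⟨by simpa using (tendsto_sum_nat_add w).sqrt,
      Eventually.of_forall fun k => Real.sqrt_pos.2 (hT_pos k)⟩
  refine ⟨fun k => -Real.log √(T k),
    tendsto_neg_atBot_atTop.comp (Real.tendsto_log_nhdsGT_zero.comp hT_tendsto), ?_⟩
  refine .of_nonneg_of_le (fun k => mul_nonneg (hx k) (Real.exp_pos _).le) (fun k => ?_)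
    (summable_sub_div_sqrt hT_anti fun k => (hT_pos k).le)
  rw [Real.exp_neg, Real.exp_log (Real.sqrt_pos.2 (hT_pos k)), ← div_eq_mul_inv, hT_sub]
  gcongr
  exact le_add_of_nonneg_right (by positivity)

lemma exists_tendsto_atTop_summable_imp_summable_mul_exp {x : ℕ → ℝ} (hx : ∀ k, 0 ≤ x k) :
    ∃ y : ℕ → ℝ, Tendsto y atTop atTop ∧
      (Summable x → Summable fun k => x k * Real.exp (y k)) := by
  by_cases hs : Summable x
  · obtain ⟨y, hy_top, hy⟩ := exists_tendsto_atTop_summable_mul_exp hx hs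
    exact ⟨y, hy_top, fun _ => hy⟩
  · exact ⟨_, tendsto_natCast_atTop_atTop, fun h => absurd h hs⟩

end SummableWeights

section Roots

variable {x : ℕ → ℝ}

lemma rpow_one_div_eq_exp (hx : ∀ k, 0 < x k) :
    (fun k : ℕ => x k ^ (1 / (k : ℝ))) = fun k => Real.exp (Real.log (x k) / k) :=
  funext fun k => by rw [Real.rpow_def_of_pos (hx k), mul_one_div]

lemma rootTendsToInfty_iff (hx : ∀ k, 0 < x k) :
    RootTendsToInfty x ↔ Tendsto (fun k => Real.log (x k) / k) atTop atTop := by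
  rw [RootTendsToInfty, rpow_one_div_eq_exp hx, Real.tendsto_exp_comp_atTop]

lemma tendsto_rpow_one_div_nhds_zero_iff (hx : ∀ k, 0 < x k) :
    Tendsto (fun k : ℕ => x k ^ (1 / (k : ℝ))) atTop (nhds 0) ↔
      Tendsto (fun k => Real.log (x k) / k) atTop atBot := by
  rw [rpow_one_div_eq_exp hx, Real.tendsto_exp_comp_nhds_zero]

lemma tendsto_log_div_div_natCast {L M : ℕ → ℝ} (hL : ∀ k, 0 < L k) (hM : ∀ k, 0 < M k)
    (hLM : Tendsto (fun k : ℕ => (L k / M k) ^ (1 / (k : ℝ))) atTop (nhds 0)) :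
    Tendsto (fun k => Real.log (M k / L k) / k) atTop atTop := by
  have hlog := (tendsto_rpow_one_div_nhds_zero_iff fun k => div_pos (hL k) (hM k)).1 hLM
  refine (tendsto_neg_atBot_atTop.comp hlog).congr fun k => ?_
  rw [Function.comp_apply, ← neg_div, ← Real.log_inv, inv_div]

end Roots

section LogQuotient

variable {m : ℕ → ℝ}

/-- The logarithms `log (m (k + 1) / m k)` of the successive quotients of a positive sequence. -/
def logQuotient (m : ℕ → ℝ) (k : ℕ) : ℝ := Real.log (m (k + 1)) - Real.log (m k)

lemma logConvexSeq_iff_monotone_logQuotient (hm : ∀ k, 0 < m k) :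
    LogConvexSeq m ↔ Monotone (logQuotient m) := by
  have hstep (k : ℕ) : m (k + 1) ^ 2 ≤ m k * m (k + 2) ↔
      logQuotient m k ≤ logQuotient m (k + 1) := by
    rw [← Real.log_le_log_iff (pow_pos (hm _) 2) (mul_pos (hm _) (hm _)), Real.log_pow,
      Real.log_mul (hm _).ne' (hm _).ne', logQuotient, logQuotient]
    push_cast
    constructor <;> intro h <;> linarith
  refine ⟨fun h => monotone_nat_of_le_succ fun k => (hstep k).1 (h (k + 1) k.succ_pos), ?_⟩
  rintro h (_ | k) hk
  · exact absurd hk (by decide)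
  · exact (hstep k).2 (h k.le_succ)

lemma rootTendsToInfty_of_tendsto_logQuotient (hm : ∀ k, 0 < m k)
    (h : Tendsto (logQuotient m) atTop atTop) : RootTendsToInfty m :=
  (rootTendsToInfty_iff hm).2 (tendsto_div_natCast_atTop_of_tendsto_sub h)

lemma RootTendsToInfty.tendsto_logQuotient (hroot : RootTendsToInfty m) (hm : ∀ k, 0 < m k)
    (hmono : Monotone (logQuotient m)) : Tendsto (logQuotient m) atTop atTop :=
  tendsto_sub_atTop_of_monotone_sub hmono ((rootTendsToInfty_iff hm).1 hroot)

end LogQuotient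

section WeightSequence

lemma LogConvexSeq.mul {u v : ℕ → ℝ} (hu : LogConvexSeq u) (hv : LogConvexSeq v) :
    LogConvexSeq fun k => u k * v k := fun k hk =>
  calc (u k * v k) ^ 2 = u k ^ 2 * v k ^ 2 := mul_pow _ _ _
    _ ≤ (u (k - 1) * u (k + 1)) * (v (k - 1) * v (k + 1)) :=
      mul_le_mul (hu k hk) (hv k hk) (sq_nonneg _) ((sq_nonneg _).trans (hu k hk))
    _ = u (k - 1) * v (k - 1) * (u (k + 1) * v (k + 1)) := mul_mul_mul_comm _ _ _ _

lemma logConvexSeq_factorial : LogConvexSeq fun k => (k.factorial : ℝ) := by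
  rintro (_ | k) hk
  · exact absurd hk (by decide)
  · rw [Nat.add_sub_cancel]
    dsimp only
    norm_cast
    rw [Nat.factorial_succ (k + 1), Nat.factorial_succ k]
    nlinarith [Nat.zero_le (k.factorial ^ 2 * (k + 1))]

lemma isWeightSeq_of_mseq {M : ℕ → ℝ} (hM0 : M 0 = 1) (hM : ∀ k, 0 < M k) (hM1 : 1 ≤ M 1)
    (hlc : LogConvexSeq (mseq M)) (hroot : RootTendsToInfty (mseq M)) : IsWeightSeq M := by
  have hm (k : ℕ) : 0 ≤ mseq M k := div_nonneg (hM k).le (Nat.cast_nonneg _)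
  have hfactor : (fun k => (k.factorial : ℝ) * mseq M k) = M :=
    funext fun k => mul_div_cancel₀ (M k) (Nat.cast_ne_zero.2 k.factorial_ne_zero)
  refine ⟨hM0, hM, hM1, hfactor ▸ logConvexSeq_factorial.mul hlc,
    tendsto_atTop_mono (fun k => ?_) hroot⟩
  refine Real.rpow_le_rpow (hm k) (div_le_self (hM k).le ?_) (by positivity)
  exact Nat.one_le_cast.2 k.factorial_pos

end WeightSequence

section Damp

variable {M e : ℕ → ℝ}

/-- The sequence `M` with its quotients damped by `e`: `M (k + 1) / M k` is divided by
`exp (e k)`, and the initial term is kept. -/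
def damp (M e : ℕ → ℝ) (k : ℕ) : ℝ := M k * Real.exp (-∑ j ∈ Finset.range k, e j)

lemma damp_zero (M e : ℕ → ℝ) : damp M e 0 = M 0 := by simp [damp]

lemma damp_succ (M e : ℕ → ℝ) (k : ℕ) :
    damp M e (k + 1) = M (k + 1) * Real.exp (-e k) * Real.exp (-∑ j ∈ Finset.range k, e j) := by
  rw [damp, Finset.sum_range_succ, neg_add_rev, Real.exp_add, mul_assoc]

lemma damp_pos {k : ℕ} (hM : 0 < M k) : 0 < damp M e k := mul_pos hM (Real.exp_pos _)

lemma mseq_damp (M e : ℕ → ℝ) : mseq (damp M e) = damp (mseq M) e :=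
  funext fun _ => mul_div_right_comm _ _ _

lemma log_damp {k : ℕ} (hM : 0 < M k) :
    Real.log (damp M e k) = Real.log (M k) - ∑ j ∈ Finset.range k, e j := by
  rw [damp, Real.log_mul hM.ne' (Real.exp_pos _).ne', Real.log_exp, sub_eq_add_neg]

lemma logQuotient_damp (hM : ∀ k, 0 < M k) :
    logQuotient (damp M e) = fun k => logQuotient M k - e k := by
  funext k
  rw [logQuotient, logQuotient, log_damp (hM _), log_damp (hM _), Finset.sum_range_succ]
  ring

lemma one_le_damp_one (hM : 0 < M 1) (he : e 0 ≤ Real.log (M 1)) : 1 ≤ damp M e 1 := by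
  rw [← Real.log_nonneg_iff (damp_pos hM), log_damp hM]
  simpa using he

lemma le_damp {L : ℕ → ℝ} (hL : ∀ k, 0 < L k) (hM : ∀ k, 0 < M k) (h0 : L 0 ≤ M 0)
    (he : Monotone e) (hle : ∀ k : ℕ, e k ≤ Real.log (M k / L k) / k) (k : ℕ) :
    L k ≤ damp M e k := by
  rcases k.eq_zero_or_pos with rfl | hk
  · rwa [damp_zero]
  have hsum : ∑ j ∈ Finset.range k, e j ≤ Real.log (M k / L k) :=
    (sum_range_le_mul_of_monotone he k).trans ((le_div_iff₀' (Nat.cast_pos.2 hk)).1 (hle k))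
  rw [Real.log_div (hM k).ne' (hL k).ne'] at hsum
  rw [← Real.log_le_log_iff (hL k) (damp_pos (hM k)), log_damp (hM k)]
  linarith

lemma tendsto_damp_div_rpow (hM : ∀ k, 0 < M k) (he : Tendsto e atTop atTop) :
    Tendsto (fun k : ℕ => (damp M e k / M k) ^ (1 / (k : ℝ))) atTop (nhds 0) := by
  rw [tendsto_rpow_one_div_nhds_zero_iff fun k => div_pos (damp_pos (hM k)) (hM k)]
  have hmean : Tendsto (fun k : ℕ => (∑ j ∈ Finset.range k, e j) / k) atTop atTop :=
    tendsto_div_natCast_atTop_of_tendsto_sub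
      (by simpa only [Finset.sum_range_succ_sub_sum] using he)
  refine (tendsto_neg_atTop_atBot.comp hmean).congr fun k => ?_
  rw [Real.log_div (damp_pos (hM k)).ne' (hM k).ne', log_damp (hM k), Function.comp_apply]
  ring

lemma moderateGrowth_damp (hM : ∀ k, 0 ≤ M k) (he : Monotone e) :
    ModerateGrowth M → ModerateGrowth (damp M e) := by
  rintro ⟨C, hC, hMC⟩
  refine ⟨C, hC, fun j k => ?_⟩
  have hsum := sum_range_add_sum_range_le_of_monotone he j k
  have := hM j
  have := hM k
  calc M (j + k) * Real.exp (-∑ i ∈ Finset.range (j + k), e i)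
      ≤ C ^ (j + k) * M j * M k *
          Real.exp (-∑ i ∈ Finset.range j, e i + -∑ i ∈ Finset.range k, e i) := by
        gcongr
        · exact hMC j k
        · linarith
    _ = C ^ (j + k) * (M j * Real.exp (-∑ i ∈ Finset.range j, e i)) *
          (M k * Real.exp (-∑ i ∈ Finset.range k, e i)) := by
        rw [Real.exp_add]
        ring

lemma derivClosed_damp (hM : ∀ k, 0 ≤ M k) (he : BddBelow (range e)) :
    DerivClosed M → DerivClosed (damp M e) := by
  rintro ⟨C, hC, hMC⟩
  obtain ⟨c, hc⟩ := he
  refine ⟨C * Real.exp |c|, by positivity, fun k => ?_⟩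
  have hexp : Real.exp (-e k) ≤ Real.exp |c| ^ (k + 1) :=
    calc Real.exp (-e k) ≤ Real.exp |c| :=
          Real.exp_le_exp.2 ((neg_le_neg (hc (mem_range_self k))).trans (neg_le_abs c))
      _ ≤ Real.exp |c| ^ (k + 1) :=
          le_self_pow₀ (Real.one_le_exp (abs_nonneg c)) k.succ_ne_zero
  have := hM k
  calc damp M e (k + 1)
      = M (k + 1) * Real.exp (-e k) * Real.exp (-∑ j ∈ Finset.range k, e j) := damp_succ M e k
    _ ≤ C ^ (k + 1) * M k * Real.exp |c| ^ (k + 1) *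
          Real.exp (-∑ j ∈ Finset.range k, e j) := by
        gcongr
        exact hMC k
    _ = (C * Real.exp |c|) ^ (k + 1) * (M k * Real.exp (-∑ j ∈ Finset.range k, e j)) := by
        rw [mul_pow]
        ring

lemma nonQuasianalytic_damp_of_le {y : ℕ → ℝ} (hM : ∀ k, 0 ≤ M k) (he : ∀ k, e k ≤ y k)
    (hy : Summable fun k => M k / M (k + 1) * Real.exp (y k)) : NonQuasianalytic (damp M e) := by
  have hquot (k : ℕ) : damp M e k / damp M e (k + 1) = M k / M (k + 1) * Real.exp (e k) := by
    rw [damp_succ, damp, mul_div_mul_right _ _ (Real.exp_pos _).ne', Real.exp_neg, ← div_eq_mul_inv,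
      div_div_eq_mul_div, mul_div_right_comm]
  have hMM (k : ℕ) : 0 ≤ M k / M (k + 1) := div_nonneg (hM _) (hM _)
  simp only [NonQuasianalytic, hquot]
  refine hy.of_nonneg_of_le (fun k => mul_nonneg (hMM k) (Real.exp_pos _).le) fun k => ?_
  have := hMM k
  gcongr
  exact he k

end Damp

/-- reduction lemma: if `L ◁ M`, `m` log-convex and `m_k^{1/k} → ∞`, then
there is a weight sequence `S` with `s` log-convex, `s_k^{1/k} → ∞`, `L ≤ S ◁ M`,
inheriting moderate growth, derivation closedness and non-quasianalyticity from `M`. -/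
theorem statement3 (L M : ℕ → ℝ)
    (hL0 : L 0 = 1) (hM0 : M 0 = 1)
    (hLpos : ∀ k, 0 < L k) (hMpos : ∀ k, 0 < M k)
    (hLM : Tendsto (fun k : ℕ => (L k / M k) ^ (1 / (k : ℝ))) atTop (nhds 0))
    (hmlc : LogConvexSeq (mseq M)) (hmroot : RootTendsToInfty (mseq M)) :
    ∃ S : ℕ → ℝ, IsWeightSeq S ∧ LogConvexSeq (mseq S) ∧ RootTendsToInfty (mseq S) ∧
      (∀ k, L k ≤ S k) ∧
      Tendsto (fun k : ℕ => (S k / M k) ^ (1 / (k : ℝ))) atTop (nhds 0) ∧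
      (ModerateGrowth M → ModerateGrowth S) ∧
      (DerivClosed M → DerivClosed S) ∧
      (NonQuasianalytic M → NonQuasianalytic S) := by
  have hm (k : ℕ) : 0 < mseq M k := div_pos (hMpos k) (Nat.cast_pos.2 k.factorial_pos)
  have ha := (logConvexSeq_iff_monotone_logQuotient hm).1 hmlc
  have ha_top := hmroot.tendsto_logQuotient hm ha
  obtain ⟨y, hy_top, hy⟩ := exists_tendsto_atTop_summable_imp_summable_mul_exp
    fun k => (div_pos (hMpos k) (hMpos (k + 1))).le
  obtain ⟨e, he, he_top, hle, hsub, hsub_top⟩ := exists_monotone_le_monotone_sub ha ha_top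
    (tendsto_inf_atTop _ ha_top
      (tendsto_inf_atTop _ (tendsto_log_div_div_natCast hLpos hMpos hLM) hy_top))
  simp only [le_inf_iff] at hle
  have hs (k : ℕ) : 0 < damp (mseq M) e k := damp_pos (hm k)
  have hslc : LogConvexSeq (mseq (damp M e)) := by
    rwa [mseq_damp, logConvexSeq_iff_monotone_logQuotient hs, logQuotient_damp hm]
  have hsroot : RootTendsToInfty (mseq (damp M e)) := by
    rw [mseq_damp]
    exact rootTendsToInfty_of_tendsto_logQuotient hs (logQuotient_damp hm ▸ hsub_top)
  have hM1 : 1 ≤ damp M e 1 :=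
    one_le_damp_one (hMpos 1) (by simpa [logQuotient, mseq, hM0] using (hle 0).1)
  have hM_nonneg (k : ℕ) : 0 ≤ M k := (hMpos k).le
  exact ⟨damp M e,
    isWeightSeq_of_mseq (damp_zero M e ▸ hM0) (fun k => damp_pos (hMpos k)) hM1 hslc hsroot,
    hslc, hsroot, le_damp hLpos hMpos (hL0.trans hM0.symm).le he fun k => (hle k).2.1,
    tendsto_damp_div_rpow hMpos he_top, moderateGrowth_damp hM_nonneg he,
    derivClosed_damp hM_nonneg (bddBelow_range_of_tendsto_atTop_atTop he_top),
    fun h => nonQuasianalytic_damp_of_le hM_nonneg (fun k => (hle k).2.2) (hy h)⟩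
end
end
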